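/- Let n ≥ 1, α > 0 and 1 < q ≤ 1 + α/n. Suppose the coefficients a_{ij} satisfy condition (8) with this α and some c > 0. If u is a non-negative entire weak solution of u_t ≥ Lu + |u|^{q−1}u in S, then u = 0 in S. -/

import Mathlib

open MeasureTheory Real

noncomputable section

/-- Euclidean space ℝⁿ. -/
abbrev Xn (n : ℕ) : Type := EuclideanSpace ℝ (Fin n)

/-- Points of the half-space `S = (0,∞) × ℝⁿ`. -/
abbrev Pt (n : ℕ) : Type := ℝ × Xn n

/-- The half-space `S = (0,∞) × ℝⁿ`. -/
def halfSpace (n : ℕ) : Set (Pt n) := {p | 0 < p.1}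

/-- Partial derivative in the time variable. -/
noncomputable def pdT {n : ℕ} (w : Pt n → ℝ) (p : Pt n) : ℝ :=
  fderiv ℝ w p (1, 0)

/-- Partial derivative in the space variable `x_j`. -/
noncomputable def pdX {n : ℕ} (w : Pt n → ℝ) (j : Fin n) (p : Pt n) : ℝ :=
  fderiv ℝ w p (0, EuclideanSpace.single j 1)

/-- The odd power function `x ↦ |x|^{q-1} x`. -/
noncomputable def oddPow (q x : ℝ) : ℝ := |x| ^ (q - 1) * x

/-- Condition (8): `𝒜(R) ≤ c R^{2-α}` for all `R > 1`, expressed as an a.e. bound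
on the majorant `A` over the region `{(t,x) : t > 0, R/2 < |x| < R}`. -/
def Cond8 {n : ℕ} (A : Pt n → ℝ) (α c : ℝ) : Prop :=
  ∀ R : ℝ, 1 < R →
    ∀ᵐ p ∂(volume.restrict
        {p : Pt n | 0 < p.1 ∧ R / 2 < ‖p.2‖ ∧ ‖p.2‖ < R}),
      A p ≤ c * R ^ (2 - α)

/-- `u` is an entire weak solution of `u_t ≥ Lu + |u|^{q−1}u` in `S`. -/
def WeakSuperSol {n : ℕ} (a : Fin n → Fin n → Pt n → ℝ) (q : ℝ)
    (u : Pt n → ℝ) : Prop :=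
  ∀ φ : Pt n → ℝ, ContDiff ℝ (⊤ : ℕ∞) φ → HasCompactSupport φ →
    tsupport φ ⊆ halfSpace n → (∀ p, 0 ≤ φ p) →
    0 ≤ ∫ p in halfSpace n,
        (pdT u p * φ p + ∑ i, ∑ j, a i j p * pdX φ i p * pdX u j p
          - oddPow q (u p) * φ p)

/-- `v` is an entire weak solution of `v_t ≤ Lv + |v|^{q−1}v` in `S`. -/
def WeakSubSol {n : ℕ} (a : Fin n → Fin n → Pt n → ℝ) (q : ℝ)
    (v : Pt n → ℝ) : Prop :=
  ∀ φ : Pt n → ℝ, ContDiff ℝ (⊤ : ℕ∞) φ → HasCompactSupport φ →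
    tsupport φ ⊆ halfSpace n → (∀ p, 0 ≤ φ p) →
    ∫ p in halfSpace n,
        (pdT v p * φ p + ∑ i, ∑ j, a i j p * pdX φ i p * pdX v j p
          - oddPow q (v p) * φ p) ≤ 0


section Helpers

open Filter Topology Set Metric

instance instHaarPt (n : ℕ) : (volume : Measure (Pt n)).IsAddHaarMeasure :=
  inferInstanceAs (((volume : Measure ℝ).prod (volume : Measure (Xn n))).IsAddHaarMeasure)

lemma isOpen_halfSpace (n : ℕ) : IsOpen (halfSpace n) :=
  isOpen_lt continuous_const continuous_fst

lemma exists_smoothing {n : ℕ} (φ : Pt n → ℝ) (hφ : ContDiff ℝ 1 φ) (hc : HasCompactSupport φ)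
    (h0 : ∀ p, 0 ≤ φ p) :
    ∃ (M : ℝ) (g : ℕ → Pt n → ℝ), (∀ k, ContDiff ℝ (⊤ : ℕ∞) (g k)) ∧ (∀ k p, 0 ≤ g k p) ∧
      (∀ k, Function.support (g k) ⊆ cthickening (1 / ((k : ℝ) + 1)) (tsupport φ)) ∧
      (∀ k p, |g k p| ≤ M) ∧ (∀ k p, ‖fderiv ℝ (g k) p‖ ≤ M) ∧
      (∀ p, Tendsto (fun k => g k p) atTop (𝓝 (φ p))) ∧
      (∀ p, Tendsto (fun k => fderiv ℝ (g k) p) atTop (𝓝 (fderiv ℝ φ p))) := by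
  have hφc := hφ.continuous
  have hfc : Continuous (fderiv ℝ φ) := hφ.continuous_fderiv one_ne_zero
  obtain ⟨M1, hM1⟩ := hc.exists_bound_of_continuous hφc
  obtain ⟨M2, hM2⟩ := (hc.fderiv ℝ).exists_bound_of_continuous hfc
  let b : ℕ → ContDiffBump (0 : Pt n) := fun k =>
    ⟨1 / ((k : ℝ) + 1) / 2, 1 / ((k : ℝ) + 1), by positivity, half_lt_self (by positivity)⟩
  have hb : Tendsto (fun k => (b k).rOut) atTop (𝓝 0) := tendsto_one_div_add_atTop_nhds_zero_nat
  let g : ℕ → Pt n → ℝ := fun k =>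
    convolution ((b k).normed volume) φ (ContinuousLinearMap.lsmul ℝ ℝ) volume
  have hL : (ContinuousLinearMap.lsmul ℝ ℝ : ℝ →L[ℝ] ℝ →L[ℝ] ℝ).precompR (Pt n) =
      (ContinuousLinearMap.lsmul ℝ ℝ : ℝ →L[ℝ] (Pt n →L[ℝ] ℝ) →L[ℝ] (Pt n →L[ℝ] ℝ)) := by
    ext1; rfl
  have hfd : ∀ k p, fderiv ℝ (g k) p =
      convolution ((b k).normed volume) (fderiv ℝ φ) (ContinuousLinearMap.lsmul ℝ ℝ) volume p := by
    intro k p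
    rw [← hL]
    exact (hc.hasFDerivAt_convolution_right (ContinuousLinearMap.lsmul ℝ ℝ)
      ((b k).continuous_normed.locallyIntegrable) hφ p).fderiv
  refine ⟨max M1 M2, g, ?_, ?_, ?_, ?_, ?_, ?_, ?_⟩
  · intro k
    exact (b k).hasCompactSupport_normed.contDiff_convolution_left _ (b k).contDiff_normed
      hφc.locallyIntegrable
  · intro k p
    refine integral_nonneg fun t => ?_
    exact mul_nonneg ((b k).nonneg_normed t) (h0 _)
  · intro k p hp
    have := support_convolution_subset (ContinuousLinearMap.lsmul ℝ ℝ) hp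
    rw [(b k).support_normed_eq] at this
    obtain ⟨x, hx, y, hy, rfl⟩ := Set.mem_add.1 this
    refine mem_cthickening_of_dist_le _ y _ _ (subset_tsupport _ hy) ?_
    have hx' : dist x 0 < 1 / ((k : ℝ) + 1) := hx
    simpa [dist_eq_norm] using hx'.le
  · intro k p
    have hM0 : 0 ≤ max M1 M2 := (norm_nonneg _).trans ((hM1 p).trans (le_max_left _ _))
    have := dist_convolution_le (z₀ := (0 : ℝ)) (g := φ) (x₀ := p) hM0 (b k).support_normed_eq.subset
      (b k).nonneg_normed ((b k).integral_normed (μ := volume)) hφc.aestronglyMeasurable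
      (fun x _ => by simpa using (hM1 x).trans (le_max_left _ _))
    simpa using this
  · intro k p
    have hM0 : 0 ≤ max M1 M2 := (norm_nonneg _).trans ((hM1 p).trans (le_max_left _ _))
    have := dist_convolution_le (z₀ := (0 : Pt n →L[ℝ] ℝ)) (g := fderiv ℝ φ) (x₀ := p) hM0
      (b k).support_normed_eq.subset
      (b k).nonneg_normed ((b k).integral_normed (μ := volume)) hfc.aestronglyMeasurable
      (fun x _ => by rw [dist_zero_right]; exact (hM2 x).trans (le_max_right _ _))
    rw [hfd]
    rwa [dist_zero_right] at this
  · intro p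
    exact ContDiffBump.convolution_tendsto_right_of_continuous hb hφc p
  · intro p
    simp_rw [hfd]
    exact ContDiffBump.convolution_tendsto_right_of_continuous hb hfc p

/-- Measurable and locally bounded on the half-space. -/
def LB {n : ℕ} (f : Pt n → ℝ) : Prop :=
  AEStronglyMeasurable f (volume.restrict (halfSpace n)) ∧
    ∀ K : Set (Pt n), IsCompact K → K ⊆ halfSpace n → ∃ M, ∀ p ∈ K, |f p| ≤ M

lemma measurableSet_halfSpace (n : ℕ) : MeasurableSet (halfSpace n) :=
  (isOpen_halfSpace n).measurableSet

lemma LB.of_continuousOn {n : ℕ} {f : Pt n → ℝ} (hf : ContinuousOn f (halfSpace n)) : LB f :=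
  ⟨hf.aestronglyMeasurable (measurableSet_halfSpace n), fun K hK hKS => by
    obtain ⟨M, hM⟩ := hK.exists_bound_of_continuousOn (hf.mono hKS)
    exact ⟨M, fun p hp => by simpa using hM p hp⟩⟩

lemma LB.add {n : ℕ} {f g : Pt n → ℝ} (hf : LB f) (hg : LB g) : LB (fun p => f p + g p) :=
  ⟨hf.1.add hg.1, fun K hK hKS => by
    obtain ⟨M, hM⟩ := hf.2 K hK hKS
    obtain ⟨N, hN⟩ := hg.2 K hK hKS
    exact ⟨M + N, fun p hp => (abs_add_le _ _).trans (add_le_add (hM p hp) (hN p hp))⟩⟩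

lemma LB.mul {n : ℕ} {f g : Pt n → ℝ} (hf : LB f) (hg : LB g) : LB (fun p => f p * g p) :=
  ⟨hf.1.mul hg.1, fun K hK hKS => by
    obtain ⟨M, hM⟩ := hf.2 K hK hKS
    obtain ⟨N, hN⟩ := hg.2 K hK hKS
    refine ⟨M * N, fun p hp => ?_⟩
    rw [abs_mul]
    exact mul_le_mul (hM p hp) (hN p hp) (abs_nonneg _) ((abs_nonneg _).trans (hM p hp))⟩

lemma LB.neg {n : ℕ} {f : Pt n → ℝ} (hf : LB f) : LB (fun p => - f p) :=
  ⟨hf.1.neg, fun K hK hKS => by simpa using hf.2 K hK hKS⟩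

lemma LB.abs {n : ℕ} {f : Pt n → ℝ} (hf : LB f) : LB (fun p => |f p|) :=
  ⟨by simpa using hf.1.norm, fun K hK hKS => by simpa using hf.2 K hK hKS⟩

lemma LB.sub {n : ℕ} {f g : Pt n → ℝ} (hf : LB f) (hg : LB g) : LB (fun p => f p - g p) := by
  simpa [sub_eq_add_neg] using hf.add hg.neg

lemma LB.sum {n : ℕ} {ι : Type*} (s : Finset ι) {f : ι → Pt n → ℝ} (hf : ∀ i, LB (f i)) :
    LB (fun p => ∑ i ∈ s, f i p) := by
  classical
  induction s using Finset.induction_on with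
  | empty => simpa using LB.of_continuousOn (n := n) (f := fun _ => 0) continuousOn_const
  | insert i s hi ih => simpa [Finset.sum_insert hi] using (hf i).add ih

lemma LB.integrableOn {n : ℕ} {f : Pt n → ℝ} (hf : LB f) {K : Set (Pt n)} (hK : IsCompact K)
    (hKS : K ⊆ halfSpace n) (h0 : ∀ p, p ∉ K → f p = 0) : IntegrableOn f (halfSpace n) := by
  obtain ⟨M, hM⟩ := hf.2 K hK hKS
  have : Integrable (K.indicator fun _ => M) (volume.restrict (halfSpace n)) := by
    rw [integrable_indicator_iff hK.measurableSet]
    refine integrableOn_const ?_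
    exact ((Measure.restrict_apply_le _ _).trans_lt hK.measure_lt_top).ne
  refine this.mono' hf.1 (Eventually.of_forall fun p => ?_)
  by_cases hp : p ∈ K
  · simpa [hp] using hM p hp
  · simp [hp, h0 p hp]

lemma continuousOn_pdT {n : ℕ} {u : Pt n → ℝ} (hu : ContDiffOn ℝ 1 u (halfSpace n)) :
    ContinuousOn (pdT u) (halfSpace n) :=
  (hu.continuousOn_fderiv_of_isOpen (isOpen_halfSpace n) le_rfl).clm_apply continuousOn_const

lemma continuousOn_pdX {n : ℕ} {u : Pt n → ℝ} (hu : ContDiffOn ℝ 1 u (halfSpace n)) (j : Fin n) :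
    ContinuousOn (pdX u j) (halfSpace n) :=
  (hu.continuousOn_fderiv_of_isOpen (isOpen_halfSpace n) le_rfl).clm_apply continuousOn_const

lemma oddPow_of_nonneg {q x : ℝ} (hq : 1 < q) (hx : 0 ≤ x) : oddPow q x = x ^ q := by
  unfold oddPow
  rw [abs_of_nonneg hx]
  rcases hx.eq_or_lt with rfl | hx
  · rw [mul_zero, Real.zero_rpow (by linarith)]
  · rw [Real.rpow_sub_one hx.ne']; field_simp

lemma continuous_oddPow {q : ℝ} (hq : 1 < q) : Continuous (oddPow q) := by
  unfold oddPow
  exact (continuous_abs.rpow_const fun x => Or.inr (by linarith)).mul continuous_id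

lemma weak_C1 {n : ℕ} {q : ℝ} (hq : 1 < q) {a : Fin n → Fin n → Pt n → ℝ}
    (ha : ∀ i j, LB (a i j)) {u : Pt n → ℝ} (hu : ContDiffOn ℝ 1 u (halfSpace n))
    (hsup : WeakSuperSol a q u) (φ : Pt n → ℝ) (hφ : ContDiff ℝ 1 φ) (hc : HasCompactSupport φ)
    (hS : tsupport φ ⊆ halfSpace n) (h0 : ∀ p, 0 ≤ φ p) :
    0 ≤ ∫ p in halfSpace n,
        (pdT u p * φ p + ∑ i, ∑ j, a i j p * pdX φ i p * pdX u j p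
          - oddPow q (u p) * φ p) := by
  obtain ⟨M, g, g1, g2, g3, g4, g5, g6, g7⟩ := exists_smoothing φ hφ hc h0
  obtain ⟨r, hr, hrS⟩ := hc.isCompact.exists_cthickening_subset_open (isOpen_halfSpace n) hS
  set K := cthickening r (tsupport φ) with hKdef
  have hK : IsCompact K := hc.isCompact.cthickening
  obtain ⟨k0, hk0⟩ := exists_nat_one_div_lt hr
  have hsupp : ∀ k, tsupport (g (k + k0)) ⊆ K := by
    intro k
    refine closure_minimal ((g3 _).trans (cthickening_mono ?_ _)) isClosed_cthickening
    refine le_trans ?_ hk0.le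
    push_cast
    gcongr
    linarith [(Nat.cast_nonneg k : (0 : ℝ) ≤ k)]
  have hcomp : ∀ k, HasCompactSupport (g (k + k0)) := fun k =>
    hK.of_isClosed_subset (isClosed_tsupport _) (hsupp k)
  have hLT := LB.of_continuousOn (continuousOn_pdT hu)
  have hLX := fun j => LB.of_continuousOn (continuousOn_pdX hu j)
  have hLO : LB (fun p => oddPow q (u p)) :=
    LB.of_continuousOn ((continuous_oddPow hq).comp_continuousOn hu.continuousOn)
  have hLH : LB (fun p => |pdT u p| + ∑ i : Fin n, ∑ j, |a i j p * pdX u j p| + |oddPow q (u p)|) :=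
    (hLT.abs.add (LB.sum _ fun i => LB.sum _ fun j => ((ha i j).mul (hLX j)).abs)).add hLO.abs
  obtain ⟨B, hB⟩ := hLH.2 K hK hrS
  have hpdx : ∀ k i p, |pdX (g k) i p| ≤ M := by
    intro k i p
    refine ((fderiv ℝ (g k) p).le_opNorm _).trans ?_
    have : ‖((0 : ℝ), (EuclideanSpace.single i (1 : ℝ) : Xn n))‖ = 1 := by
      simp [Prod.norm_def]
    rw [this, mul_one]; exact g5 k p
  refine ge_of_tendsto' (x := atTop) (f := fun k : ℕ => ∫ p in halfSpace n,
        (pdT u p * g (k + k0) p + ∑ i, ∑ j, a i j p * pdX (g (k + k0)) i p * pdX u j p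
          - oddPow q (u p) * g (k + k0) p)) ?_
    fun k => hsup _ (g1 _) (hcomp k) ((hsupp k).trans hrS) (g2 _)
  refine tendsto_integral_of_dominated_convergence (K.indicator fun _ => M * B) ?_ ?_ ?_ ?_
  · intro k
    have hgs : ContDiffOn ℝ 1 (g (k + k0)) (halfSpace n) :=
      ((g1 (k + k0)).of_le (by exact_mod_cast le_top)).contDiffOn
    have hg := LB.of_continuousOn (hgs.continuousOn)
    exact (((hLT.mul hg).add (LB.sum _ fun i => LB.sum _ fun j =>
      ((ha i j).mul (LB.of_continuousOn (continuousOn_pdX hgs i))).mul (hLX j))).sub (hLO.mul hg)).1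
  · rw [integrable_indicator_iff hK.measurableSet]
    refine integrableOn_const ?_
    exact ((Measure.restrict_apply_le _ _).trans_lt hK.measure_lt_top).ne
  · intro k
    refine Eventually.of_forall fun p => ?_
    by_cases hp : p ∈ K
    · simp only [hp, indicator_of_mem]
      have hM : 0 ≤ M := (abs_nonneg _).trans (g4 0 p)
      have h1 := hB p hp
      rw [abs_of_nonneg (by positivity)] at h1
      refine le_trans ?_ (mul_le_mul_of_nonneg_left h1 hM)
      rw [mul_add, mul_add, Finset.mul_sum, Real.norm_eq_abs]
      refine (abs_sub _ _).trans (add_le_add ((abs_add_le _ _).trans (add_le_add ?_ ?_)) ?_)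
      · rw [abs_mul, mul_comm]
        exact mul_le_mul_of_nonneg_right (g4 _ _) (abs_nonneg _)
      · refine (Finset.abs_sum_le_sum_abs _ _).trans (Finset.sum_le_sum fun i _ => ?_)
        rw [Finset.mul_sum]
        refine (Finset.abs_sum_le_sum_abs _ _).trans (Finset.sum_le_sum fun j _ => ?_)
        rw [mul_right_comm, abs_mul, mul_comm]
        exact mul_le_mul_of_nonneg_right (hpdx _ _ _) (abs_nonneg _)
      · rw [abs_mul, mul_comm]
        exact mul_le_mul_of_nonneg_right (g4 _ _) (abs_nonneg _)
    · have hp' : p ∉ tsupport (g (k + k0)) := fun h => hp (hsupp k h)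
      have e1 : g (k + k0) p = 0 := image_eq_zero_of_notMem_tsupport hp'
      have e2 : fderiv ℝ (g (k + k0)) p = 0 := fderiv_of_notMem_tsupport (𝕜 := ℝ) hp'
      simp [hp, e1, pdX, e2]
  · refine Eventually.of_forall fun p => ?_
    have t1 := (g6 p).comp (tendsto_add_atTop_nat k0)
    have t2 := (g7 p).comp (tendsto_add_atTop_nat k0)
    refine ((t1.const_mul _).add (tendsto_finsetSum _ fun i _ => tendsto_finsetSum _ fun j _ => ?_)).sub
      (t1.const_mul _)
    refine Tendsto.mul_const _ (Tendsto.const_mul _ ?_)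
    exact ((ContinuousLinearMap.apply ℝ ℝ ((0, EuclideanSpace.single i 1) : Pt n)).continuous.tendsto
      _).comp t2

lemma integral_pdT_eq_zero {n : ℕ} (F : Pt n → ℝ) (hF : ContDiff ℝ 1 F) (hc : HasCompactSupport F)
    (hS : tsupport F ⊆ halfSpace n) : ∫ p in halfSpace n, pdT F p = 0 := by
  have hsupp : ∀ p, p ∉ halfSpace n → pdT F p = 0 := by
    intro p hp
    simp [pdT, fderiv_of_notMem_tsupport (𝕜 := ℝ) (fun h => hp (hS h))]
  rw [setIntegral_eq_integral_of_forall_compl_eq_zero hsupp]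
  have hcont : Continuous (fun p => fderiv ℝ F p ((1, 0) : Pt n)) :=
    (hF.continuous_fderiv one_ne_zero).clm_apply continuous_const
  have hIntg : Integrable (fun p => fderiv ℝ F p ((1, 0) : Pt n)) :=
    hcont.integrable_of_hasCompactSupport
      ((hc.fderiv ℝ).comp_left (g := fun L : Pt n →L[ℝ] ℝ => L (1, 0)) rfl)
  have := integral_mul_fderiv_eq_neg_fderiv_mul_of_integrable (μ := (volume : Measure (Pt n)))
    (f := fun _ => (1 : ℝ)) (g := F)
    (v := ((1, 0) : Pt n)) (by simp) (by simpa using hIntg)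
    (by simpa using hF.continuous.integrable_of_hasCompactSupport hc)
    (fun x _ => by fun_prop) (fun x _ => (hF.differentiable one_ne_zero) x)
  simpa [pdT] using this

lemma exists_smoothTransition_deriv_bound :
    ∃ C : ℝ, 0 < C ∧ (∀ x, deriv Real.smoothTransition x ≤ C) ∧
      (∀ x, 0 ≤ deriv Real.smoothTransition x) ∧
      (∀ x, 1 < x → deriv Real.smoothTransition x = 0) := by
  have h1 : ∀ x, 1 < x → deriv Real.smoothTransition x = 0 := by
    intro x hx
    have : Real.smoothTransition =ᶠ[𝓝 x] fun _ => 1 := by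
      filter_upwards [lt_mem_nhds hx] with y hy
      exact Real.smoothTransition.one_of_one_le (le_of_lt hy)
    rw [this.deriv_eq, deriv_const]
  have h0 : ∀ x, x < 0 → deriv Real.smoothTransition x = 0 := by
    intro x hx
    have : Real.smoothTransition =ᶠ[𝓝 x] fun _ => 0 := by
      filter_upwards [gt_mem_nhds hx] with y hy
      exact Real.smoothTransition.zero_of_nonpos (le_of_lt hy)
    rw [this.deriv_eq, deriv_const]
  have hcont : Continuous (deriv Real.smoothTransition) :=
    (Real.smoothTransition.contDiff (n := 1)).continuous_deriv le_rfl
  obtain ⟨M, hM⟩ := (isCompact_Icc (a := (0 : ℝ)) (b := 1)).exists_bound_of_continuousOn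
    hcont.continuousOn
  refine ⟨|M| + 1, by positivity, fun x => ?_, fun x => Real.smoothTransition.monotone.deriv_nonneg,
    h1⟩
  by_cases hx : x ∈ Icc (0 : ℝ) 1
  · have := hM x hx
    rw [Real.norm_eq_abs] at this
    linarith [le_abs_self (deriv Real.smoothTransition x), le_abs_self M]
  · rw [mem_Icc, not_and_or, not_le, not_le] at hx
    rcases hx with hx | hx
    · rw [h0 x hx]; positivity
    · rw [h1 x hx]; positivity

lemma exists_cutoff (n : ℕ) (α : ℝ) :
    ∃ C : ℝ, 0 < C ∧ ∀ R : ℝ, 1 < R → ∃ ψ : Pt n → ℝ, ContDiff ℝ (⊤ : ℕ∞) ψ ∧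
      (∀ p, 0 ≤ ψ p ∧ ψ p ≤ 1) ∧
      (∀ p, ψ p ≠ 0 → 1 / (2 * R) ≤ p.1 ∧ p.1 ≤ 2 * R ^ α ∧ ‖p.2‖ ≤ R) ∧
      (∀ p : Pt n, 1 / R ≤ p.1 → p.1 ≤ R ^ α → ‖p.2‖ ≤ R / 2 → ψ p = 1) ∧
      (∀ p, - pdT ψ p ≤ C * R ^ (-α)) ∧
      (∀ p : Pt n, p.1 < R ^ α → 0 ≤ pdT ψ p) ∧
      (∀ i p, |pdX ψ i p| ≤ C * R⁻¹) ∧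
      (∀ i (p : Pt n), ¬ (R / 2 < ‖p.2‖ ∧ ‖p.2‖ < R) → pdX ψ i p = 0) := by
  obtain ⟨C1, hC1, hd1, hd2, hd3⟩ := exists_smoothTransition_deriv_bound
  let χ : ContDiffBump (0 : Xn n) := ⟨2 / 3, 5 / 6, by norm_num, by norm_num⟩
  have hχ : ContDiff ℝ (⊤ : ℕ∞) χ := χ.contDiff
  have hχd : Continuous (fderiv ℝ χ) := hχ.continuous_fderiv (by simp)
  obtain ⟨C2, hC2⟩ := (χ.hasCompactSupport.fderiv ℝ).exists_bound_of_continuous hχd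
  have hχ0 : ∀ y : Xn n, ¬ (1 / 2 < ‖y‖ ∧ ‖y‖ < 1) → fderiv ℝ χ y = 0 := by
    intro y hy
    rw [not_and_or, not_lt, not_lt] at hy
    rcases hy with hy | hy
    · have : (χ : Xn n → ℝ) =ᶠ[𝓝 y] 1 := by
        refine χ.eventuallyEq_one_of_mem_ball ?_
        rw [mem_ball_zero_iff]
        exact hy.trans_lt (by norm_num)
      rw [this.fderiv_eq]; simp
    · refine fderiv_of_notMem_tsupport (𝕜 := ℝ) ?_
      rw [χ.tsupport_eq, mem_closedBall_zero_iff, not_le]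
      exact lt_of_lt_of_le (by norm_num) hy
  have hC20 : 0 ≤ C2 := (norm_nonneg _).trans (hC2 0)
  refine ⟨C1 + C2, by positivity, fun R hR => ?_⟩
  have hR0 : 0 < R := by linarith
  have hRα : 0 < R ^ α := Real.rpow_pos_of_pos hR0 _
  let σ := Real.smoothTransition
  have hσ : ContDiff ℝ (⊤ : ℕ∞) σ := Real.smoothTransition.contDiff
  have hσd : ∀ x, HasDerivAt σ (deriv σ x) x := fun x =>
    (hσ.differentiable (by simp) x).hasDerivAt
  let ψ : Pt n → ℝ := fun p => σ (2 * R * p.1 - 1) * σ (2 - p.1 * (R ^ α)⁻¹) * χ (R⁻¹ • p.2)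
  have hψ : ContDiff ℝ (⊤ : ℕ∞) ψ := by
    refine ((hσ.comp ?_).mul (hσ.comp ?_)).mul (hχ.comp ?_) <;> fun_prop
  have hψd : ∀ p, HasFDerivAt ψ (fderiv ℝ ψ p) p := fun p =>
    (hψ.differentiable (by simp) p).hasFDerivAt
  have hT : ∀ p, pdT ψ p = (deriv σ (2 * R * p.1 - 1) * (2 * R) * σ (2 - p.1 * (R ^ α)⁻¹) +
      σ (2 * R * p.1 - 1) * (deriv σ (2 - p.1 * (R ^ α)⁻¹) * (-(R ^ α)⁻¹))) * χ (R⁻¹ • p.2) := by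
    rintro ⟨t, x⟩
    have h1 : HasDerivAt (fun t => ψ (t, x)) (fderiv ℝ ψ (t, x) (1, 0)) t :=
      HasFDerivAt.comp_hasDerivAt (f := fun t : ℝ => ((t, x) : Pt n)) t (hψd (t, x)) ((hasDerivAt_id t).prodMk (hasDerivAt_const t x))
    have e1 : HasDerivAt (fun t : ℝ => 2 * R * t - 1) (2 * R) t := by
      simpa using ((hasDerivAt_id t).const_mul (2 * R)).sub_const 1
    have e2 : HasDerivAt (fun t : ℝ => 2 - t * (R ^ α)⁻¹) (-(R ^ α)⁻¹) t := by
      simpa using ((hasDerivAt_id t).mul_const ((R ^ α)⁻¹)).const_sub 2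
    have h2 : HasDerivAt (fun t => ψ (t, x)) _ t :=
      (((hσd _).comp t e1).mul ((hσd _).comp t e2)).mul_const (χ (R⁻¹ • x))
    exact h1.unique h2
  have hX : ∀ i p, pdX ψ i p = σ (2 * R * p.1 - 1) * σ (2 - p.1 * (R ^ α)⁻¹) *
      (R⁻¹ * fderiv ℝ χ (R⁻¹ • p.2) (EuclideanSpace.single i 1)) := by
    rintro i ⟨t, x⟩
    have h1 : HasFDerivAt (fun x => ψ (t, x)) _ x :=
      (hψd (t, x)).comp x ((hasFDerivAt_const t x).prodMk (hasFDerivAt_id x))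
    have e1 : HasFDerivAt (fun x : Xn n => R⁻¹ • x) (R⁻¹ • ContinuousLinearMap.id ℝ (Xn n)) x :=
      (hasFDerivAt_id x).const_smul R⁻¹
    have h2 : HasFDerivAt (fun x => ψ (t, x)) _ x :=
      (((hχ.differentiable (by simp) (R⁻¹ • x)).hasFDerivAt).comp x e1).const_mul
        (σ (2 * R * t - 1) * σ (2 - t * (R ^ α)⁻¹))
    have h3 := congrArg (fun L : Xn n →L[ℝ] ℝ => L (EuclideanSpace.single i 1)) (h1.unique h2)
    simpa [pdX] using h3
  have hnorm : ∀ y : Xn n, ‖R⁻¹ • y‖ = ‖y‖ / R := by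
    intro y
    rw [norm_smul, norm_inv, Real.norm_of_nonneg hR0.le]; field_simp
  have s0 : ∀ x, 0 ≤ σ x := Real.smoothTransition.nonneg
  have s1 : ∀ x, σ x ≤ 1 := Real.smoothTransition.le_one
  have c0 : ∀ x, 0 ≤ χ x := fun x => χ.nonneg
  have c1 : ∀ x, χ x ≤ 1 := fun x => χ.le_one
  refine ⟨ψ, hψ, fun p => ⟨?_, ?_⟩, fun p hp => ?_, fun p h1 h2 h3 => ?_, fun p => ?_, fun p hp => ?_,
    fun i p => ?_, fun i p hp => ?_⟩
  · exact mul_nonneg (mul_nonneg (s0 _) (s0 _)) (c0 _)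
  · exact mul_le_one₀ (mul_le_one₀ (s1 _) (s0 _) (s1 _)) (c0 _) (c1 _)
  · have hp1 : σ (2 * R * p.1 - 1) ≠ 0 := fun h => hp (by simp [ψ, h])
    have hp2 : σ (2 - p.1 * (R ^ α)⁻¹) ≠ 0 := fun h => hp (by simp [ψ, h])
    have hp3 : χ (R⁻¹ • p.2) ≠ 0 := fun h => hp (by simp [ψ, h])
    have k1 : 0 < 2 * R * p.1 - 1 := by
      by_contra h; exact hp1 (Real.smoothTransition.zero_of_nonpos (not_lt.1 h))
    have k2 : 0 < 2 - p.1 * (R ^ α)⁻¹ := by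
      by_contra h; exact hp2 (Real.smoothTransition.zero_of_nonpos (not_lt.1 h))
    have k3 : R⁻¹ • p.2 ∈ ball (0 : Xn n) (5 / 6) := by
      have : R⁻¹ • p.2 ∈ Function.support χ := hp3
      rwa [χ.support_eq] at this
    rw [mem_ball_zero_iff, hnorm, div_lt_iff₀ hR0] at k3
    refine ⟨?_, ?_, by linarith⟩
    · rw [div_le_iff₀ (by positivity)]; linarith
    · rw [← div_eq_mul_inv, sub_pos, div_lt_iff₀ hRα] at k2; exact k2.le
  · have k1 : σ (2 * R * p.1 - 1) = 1 := by
      refine Real.smoothTransition.one_of_one_le ?_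
      rw [div_le_iff₀ hR0] at h1; linarith
    have k2 : σ (2 - p.1 * (R ^ α)⁻¹) = 1 := by
      refine Real.smoothTransition.one_of_one_le ?_
      have : p.1 / R ^ α ≤ 1 := (div_le_one hRα).2 h2
      rw [div_eq_mul_inv] at this; linarith
    have k3 : χ (R⁻¹ • p.2) = 1 := by
      refine χ.one_of_mem_closedBall ?_
      rw [mem_closedBall_zero_iff, hnorm, div_le_iff₀ hR0]
      have : (χ.rIn : ℝ) = 2 / 3 := rfl
      rw [this]; linarith
    simp [ψ, k1, k2, k3]
  · rw [hT, Real.rpow_neg hR0.le]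
    set A1 := deriv σ (2 * R * p.1 - 1) * (2 * R) * σ (2 - p.1 * (R ^ α)⁻¹)
    have hA1 : 0 ≤ A1 := mul_nonneg (mul_nonneg (hd2 _) (by positivity)) (s0 _)
    have hA1χ := mul_nonneg hA1 (c0 (R⁻¹ • p.2))
    have h3 : σ (2 * R * p.1 - 1) * deriv σ (2 - p.1 * (R ^ α)⁻¹) * χ (R⁻¹ • p.2) ≤ C1 + C2 := by
      have t1 : σ (2 * R * p.1 - 1) * deriv σ (2 - p.1 * (R ^ α)⁻¹) ≤ 1 * C1 :=
        mul_le_mul (s1 _) (hd1 _) (hd2 _) zero_le_one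
      have t2 : σ (2 * R * p.1 - 1) * deriv σ (2 - p.1 * (R ^ α)⁻¹) * χ (R⁻¹ • p.2) ≤ 1 * C1 * 1 :=
        mul_le_mul t1 (c1 _) (c0 _) (by positivity)
      linarith
    have h4 := mul_le_mul_of_nonneg_right h3 (inv_pos.2 hRα).le
    nlinarith
  · rw [hT]
    have : deriv σ (2 - p.1 * (R ^ α)⁻¹) = 0 := by
      refine hd3 _ ?_
      have : p.1 / R ^ α < 1 := (div_lt_one hRα).2 hp
      rw [div_eq_mul_inv] at this; linarith
    rw [this]
    have := mul_nonneg (mul_nonneg (hd2 (2 * R * p.1 - 1)) (by positivity : (0:ℝ) ≤ 2 * R))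
      (s0 (2 - p.1 * (R ^ α)⁻¹))
    have := mul_nonneg this (c0 (R⁻¹ • p.2))
    simpa using this
  · rw [hX, abs_mul, abs_of_nonneg (mul_nonneg (s0 _) (s0 _)), abs_mul,
      abs_of_nonneg (inv_pos.2 hR0).le]
    have t1 : |fderiv ℝ χ (R⁻¹ • p.2) (EuclideanSpace.single i 1)| ≤ C1 + C2 := by
      refine ((fderiv ℝ χ (R⁻¹ • p.2)).le_opNorm _).trans ?_
      rw [PiLp.norm_single, norm_one, mul_one]
      linarith [hC2 (R⁻¹ • p.2)]
    have t2 : σ (2 * R * p.1 - 1) * σ (2 - p.1 * (R ^ α)⁻¹) ≤ 1 := mul_le_one₀ (s1 _) (s0 _) (s1 _)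
    calc _ ≤ 1 * (R⁻¹ * (C1 + C2)) := by gcongr
      _ = _ := by ring
  · rw [hX, hχ0 (R⁻¹ • p.2)]
    · simp
    · intro h
      apply hp
      rw [hnorm, lt_div_iff₀ hR0, div_lt_iff₀ hR0] at h
      constructor <;> linarith

lemma scalar_young {w ψ δ q : ℝ} {s : ℕ} (hw : 0 ≤ w) (h0 : 0 ≤ ψ) (h1 : ψ ≤ 1) (hδ : 0 < δ)
    (hδ2 : δ ≤ 1) (hδq : 1 + δ ≤ q) (hs : 3 ≤ s) (hsq : (s : ℝ) * (1 + δ) / q ≤ s - 2) :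
    (1 + w) ^ (1 + δ) * ψ ^ (s - 2) ≤ 4 * (1 + w ^ q * ψ ^ s) := by
  have hq : 0 < q := by linarith
  have hwq : 0 ≤ w ^ q := Real.rpow_nonneg hw _
  rcases h0.eq_or_lt with rfl | hψ
  · rw [zero_pow (by omega), zero_pow (by omega)]; norm_num
  have h2 : (2 : ℝ) ^ (1 + δ) ≤ 4 := by
    calc (2 : ℝ) ^ (1 + δ) ≤ 2 ^ (2 : ℝ) := Real.rpow_le_rpow_of_exponent_le one_le_two (by linarith)
      _ = 4 := by norm_num
  have hp1 : ψ ^ (s - 2) ≤ 1 := pow_le_one₀ h0 h1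
  have hp0 : 0 ≤ ψ ^ (s - 2) := by positivity
  rcases le_or_gt w 1 with hw1 | hw1
  · have t1 : (1 + w) ^ (1 + δ) ≤ 4 :=
      (Real.rpow_le_rpow (by linarith) (by linarith) (by linarith)).trans h2
    calc (1 + w) ^ (1 + δ) * ψ ^ (s - 2) ≤ 4 * 1 := by gcongr
      _ ≤ _ := by have := mul_nonneg hwq (pow_nonneg h0 s); linarith
  · have t1 : (1 + w) ^ (1 + δ) ≤ 4 * w ^ (1 + δ) := by
      calc (1 + w) ^ (1 + δ) ≤ (2 * w) ^ (1 + δ) :=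
            Real.rpow_le_rpow (by linarith) (by linarith) (by linarith)
        _ = 2 ^ (1 + δ) * w ^ (1 + δ) := Real.mul_rpow (by norm_num) hw
        _ ≤ _ := by gcongr
    set y := ψ ^ ((s : ℝ) / q) with hy
    have hy0 : 0 ≤ y := Real.rpow_nonneg h0 _
    have t2 : ψ ^ (s - 2) ≤ y ^ (1 + δ) := by
      rw [← Real.rpow_natCast, hy, ← Real.rpow_mul h0]
      refine Real.rpow_le_rpow_of_exponent_ge hψ h1 ?_
      rw [Nat.cast_sub (by omega)]
      push_cast
      calc _ = (s : ℝ) * (1 + δ) / q := by ring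
        _ ≤ _ := hsq
    have t3 : (w * y) ^ (1 + δ) ≤ 1 + (w * y) ^ q := by
      have hwy : 0 ≤ w * y := mul_nonneg hw hy0
      rcases le_or_gt (w * y) 1 with h | h
      · have := Real.rpow_le_one hwy h (by linarith : 0 ≤ 1 + δ)
        linarith [Real.rpow_nonneg hwy q]
      · have := Real.rpow_le_rpow_of_exponent_le h.le hδq
        linarith
    have t4 : (w * y) ^ q = w ^ q * ψ ^ s := by
      rw [Real.mul_rpow hw hy0, hy, ← Real.rpow_mul h0, div_mul_cancel₀ _ hq.ne', Real.rpow_natCast]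
    calc (1 + w) ^ (1 + δ) * ψ ^ (s - 2) ≤ (4 * w ^ (1 + δ)) * y ^ (1 + δ) := by gcongr
      _ = 4 * (w * y) ^ (1 + δ) := by rw [Real.mul_rpow hw hy0]; ring
      _ ≤ 4 * (1 + (w * y) ^ q) := by linarith
      _ = _ := by rw [t4]

lemma scalar_cs {W ψ δ κ X Z Y : ℝ} {s : ℕ} (hW : 1 ≤ W) (h0 : 0 ≤ ψ) (hδ : 0 < δ) (hκ : 0 < κ)
    (hs : 2 ≤ s) (hQ : ∀ b d : ℝ, 0 ≤ b ^ 2 * X - 2 * b * d * Z + d ^ 2 * Y) :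
    s * ψ ^ (s - 1) * (1 + W ^ (-δ)) * Z - ψ ^ s * (δ * W ^ (-δ - 1) / κ) * X ≤
      s ^ 2 / δ * κ * W ^ (1 + δ) * ψ ^ (s - 2) * Y := by
  obtain ⟨m, rfl⟩ := Nat.exists_eq_add_of_le hs
  have hW0 : 0 < W := by linarith
  have hY : 0 ≤ Y := by simpa using hQ 0 1
  set γ := δ * W ^ (-δ - 1) / κ with hγ
  have hγ0 : 0 < γ := by have := Real.rpow_pos_of_pos hW0 (-δ - 1); positivity
  have hf0 : 0 ≤ W ^ (-δ) := Real.rpow_nonneg hW0.le _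
  have hf1 : W ^ (-δ) ≤ 1 := Real.rpow_le_one_of_one_le_of_nonpos hW (by linarith)
  set f := 1 + W ^ (-δ) with hf
  have hinv : κ * W ^ (1 + δ) / δ = 1 / γ := by
    have : W ^ (1 + δ) * W ^ (-δ - 1) = 1 := by
      rw [← Real.rpow_add hW0, show (1 + δ) + (-δ - 1) = 0 by ring, Real.rpow_zero]
    rw [hγ]
    have := Real.rpow_pos_of_pos hW0 (-δ - 1)
    field_simp
    linarith
  have h := hQ (2 * γ * ψ) (((2 + m : ℕ) : ℝ) * f)
  set S : ℝ := ((2 + m : ℕ) : ℝ)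
  have e1 : 2 + m - 1 = m + 1 := by omega
  have e2 : 2 + m - 2 = m := by omega
  rw [e1, e2]
  have hf4 : f ^ 2 ≤ 4 := by nlinarith
  have h2 : 0 ≤ ψ ^ m * (4 * γ ^ 2 * ψ ^ 2 * X - 4 * γ * ψ * S * f * Z + S ^ 2 * f ^ 2 * Y) := by
    refine mul_nonneg (pow_nonneg h0 _) ?_
    calc 0 ≤ _ := h
      _ = _ := by ring
  have h3 : 0 ≤ ψ ^ m * S ^ 2 * Y * (4 - f ^ 2) :=
    mul_nonneg (by positivity) (by linarith)
  have : S ^ 2 / δ * κ * W ^ (1 + δ) * ψ ^ m * Y = S ^ 2 * (1 / γ) * ψ ^ m * Y := by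
    rw [← hinv]; ring
  rw [this]
  have h4 : S * ψ ^ (m + 1) * f * Z - ψ ^ (2 + m) * γ * X =
      S ^ 2 * (1 / γ) * ψ ^ m * Y - (ψ ^ m * (4 * γ ^ 2 * ψ ^ 2 * X - 4 * γ * ψ * S * f * Z +
        S ^ 2 * f ^ 2 * Y) + ψ ^ m * S ^ 2 * Y * (4 - f ^ 2)) / (4 * γ) := by
    field_simp
    ring
  rw [h4]
  have : 0 ≤ (ψ ^ m * (4 * γ ^ 2 * ψ ^ 2 * X - 4 * γ * ψ * S * f * Z +
        S ^ 2 * f ^ 2 * Y) + ψ ^ m * S ^ 2 * Y * (4 - f ^ 2)) / (4 * γ) := by positivity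
  linarith

lemma fderiv_pow_mul_comp {n : ℕ} {ψ u : Pt n → ℝ} {G : ℝ → ℝ} {G' : ℝ} {p : Pt n} (s : ℕ)
    (hψ : DifferentiableAt ℝ ψ p) (hu : DifferentiableAt ℝ u p) (hG : HasDerivAt G G' (u p))
    (v : Pt n) :
    fderiv ℝ (fun p => ψ p ^ s * G (u p)) p v =
      s * ψ p ^ (s - 1) * G (u p) * fderiv ℝ ψ p v + ψ p ^ s * G' * fderiv ℝ u p v := by
  have h1 := hψ.hasFDerivAt.pow s
  have h2 : HasFDerivAt (fun p => G (u p)) (G' • fderiv ℝ u p) p :=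
    hG.comp_hasFDerivAt p hu.hasFDerivAt
  have h3 : HasFDerivAt (fun p => ψ p ^ s * G (u p)) _ p := h1.mul h2
  rw [h3.fderiv]
  simp
  ring

lemma contDiff_pow_mul_comp {n : ℕ} {ψ u : Pt n → ℝ} {G : ℝ → ℝ} {s : ℕ} (hs : s ≠ 0)
    (hψ : ContDiff ℝ (⊤ : ℕ∞) ψ) (hS : tsupport ψ ⊆ halfSpace n)
    (hu : ContDiffOn ℝ 1 u (halfSpace n)) (hG : ∀ p ∈ halfSpace n, ContDiffAt ℝ 1 G (u p)) :
    ContDiff ℝ 1 (fun p => ψ p ^ s * G (u p)) := by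
  rw [contDiff_iff_contDiffAt]
  intro p
  by_cases hp : p ∈ halfSpace n
  · have h1 : ContDiffAt ℝ 1 ψ p := (hψ.of_le (by exact_mod_cast le_top)).contDiffAt
    exact (h1.pow s).mul ((hG p hp).comp p (hu.contDiffAt ((isOpen_halfSpace n).mem_nhds hp)))
  · have : (fun p => ψ p ^ s * G (u p)) =ᶠ[𝓝 p] fun _ => 0 := by
      have := notMem_tsupport_iff_eventuallyEq.1 (fun h => hp (hS h))
      filter_upwards [this] with y hy
      simp [hy, hs]
    exact contDiffAt_const.congr_of_eventuallyEq this

lemma tsupport_pow_mul_subset {n : ℕ} (ψ g : Pt n → ℝ) {s : ℕ} (hs : s ≠ 0) :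
    tsupport (fun p => ψ p ^ s * g p) ⊆ tsupport ψ := by
  refine closure_mono fun p hp h => hp ?_
  simp [h, hs]

/-- Outer region. -/
def outer (n : ℕ) (α R : ℝ) : Set (Pt n) := {p | R ^ α ≤ p.1 ∨ R / 2 ≤ ‖p.2‖}

/-- The box containing the support of the cutoff function. -/
def box (n : ℕ) (α R : ℝ) : Set (Pt n) :=
  Icc (1 / (2 * R)) (2 * R ^ α) ×ˢ closedBall (0 : Xn n) R

lemma isCompact_box (n : ℕ) (α R : ℝ) : IsCompact (box n α R) :=
  isCompact_Icc.prod (isCompact_closedBall _ _)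

lemma measurableSet_outer (n : ℕ) (α R : ℝ) : MeasurableSet (outer n α R) := by
  have h1 : IsClosed (outer n α R) :=
    (isClosed_le continuous_const continuous_fst).union
      (isClosed_le continuous_const continuous_snd.norm)
  exact h1.measurableSet

lemma box_subset (n : ℕ) (α : ℝ) {R : ℝ} (hR : 1 < R) : box n α R ⊆ halfSpace n := by
  intro p hp
  have h1 : 1 / (2 * R) ≤ p.1 := hp.1.1
  have : 0 < 1 / (2 * R) := by positivity
  exact this.trans_le h1

lemma volume_box_le (n : ℕ) (α : ℝ) :
    ∃ C : ℝ, 0 < C ∧ ∀ R : ℝ, 1 < R → volume.real (box n α R) ≤ C * (R ^ α * R ^ (n : ℝ)) := by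
  refine ⟨2 * (volume.real (closedBall (0 : Xn n) 1) + 1), by positivity, fun R hR => ?_⟩
  have hR0 : 0 < R := by linarith
  have hRα : 0 < R ^ α := Real.rpow_pos_of_pos hR0 _
  have h1 : volume.real (box n α R) =
      volume.real (Icc (1 / (2 * R)) (2 * R ^ α)) * volume.real (closedBall (0 : Xn n) R) :=
    measureReal_prod_prod _ _
  have h2 : volume.real (Icc (1 / (2 * R)) (2 * R ^ α)) ≤ 2 * R ^ α := by
    rw [Real.volume_real_Icc]
    refine max_le ?_ (by positivity)
    have : 0 < 1 / (2 * R) := by positivity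
    linarith
  have h3 : volume.real (closedBall (0 : Xn n) R) =
      R ^ (n : ℝ) * volume.real (closedBall (0 : Xn n) 1) := by
    have := Measure.addHaar_real_closedBall' (volume : Measure (Xn n)) 0 hR0.le
    rw [this, finrank_euclideanSpace_fin, Real.rpow_natCast]
  rw [h1, h3]
  calc _ ≤ (2 * R ^ α) * (R ^ (n : ℝ) * (volume.real (closedBall (0 : Xn n) 1) + 1)) := by
        gcongr
        linarith
    _ = _ := by ring

lemma quad_expand {n : ℕ} (a : Fin n → Fin n → ℝ) (hs : ∀ i j, a i j = a j i)
    (X Y : Fin n → ℝ) (b d : ℝ) :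
    ∑ i, ∑ j, a i j * (b * X i - d * Y i) * (b * X j - d * Y j) =
      b ^ 2 * (∑ i, ∑ j, a i j * X i * X j) - 2 * b * d * (∑ i, ∑ j, a i j * Y i * X j) +
        d ^ 2 * (∑ i, ∑ j, a i j * Y i * Y j) := by
  have hsw : ∑ i, ∑ j, a i j * X i * Y j = ∑ i, ∑ j, a i j * Y i * X j := by
    rw [Finset.sum_comm]
    refine Finset.sum_congr rfl fun i _ => Finset.sum_congr rfl fun j _ => ?_
    rw [hs j i]; ring
  have : ∑ i, ∑ j, a i j * (b * X i - d * Y i) * (b * X j - d * Y j) =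
      b ^ 2 * (∑ i, ∑ j, a i j * X i * X j) - b * d * (∑ i, ∑ j, a i j * X i * Y j)
        - b * d * (∑ i, ∑ j, a i j * Y i * X j) +
        d ^ 2 * (∑ i, ∑ j, a i j * Y i * Y j) := by
    simp only [Finset.mul_sum, ← Finset.sum_sub_distrib, ← Finset.sum_add_distrib]
    refine Finset.sum_congr rfl fun i _ => Finset.sum_congr rfl fun j _ => ?_
    ring
  rw [this, hsw]; ring

lemma quad_le {n : ℕ} (a : Fin n → Fin n → ℝ) (A c α R C : ℝ) (hR : 0 < R) (hA : 0 ≤ A)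
    (Y : Fin n → ℝ) (hY : ∀ i, |Y i| ≤ C * R⁻¹) (hAR : A ≤ c * R ^ (2 - α))
    (hf : ∀ ξ : Xn n, ∑ i, ∑ j, a i j * ξ i * ξ j ≤ A * ‖ξ‖ ^ 2) :
    ∑ i, ∑ j, a i j * Y i * Y j ≤ c * (n * C ^ 2) * R ^ (-α) := by
  have h1 := hf (WithLp.toLp 2 Y)
  have h2 : ‖(WithLp.toLp 2 Y : Xn n)‖ ^ 2 ≤ n * (C * R⁻¹) ^ 2 := by
    rw [EuclideanSpace.norm_sq_eq]
    calc ∑ i, ‖Y i‖ ^ 2 ≤ ∑ _i : Fin n, (C * R⁻¹) ^ 2 := by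
          refine Finset.sum_le_sum fun i _ => ?_
          exact pow_le_pow_left₀ (norm_nonneg _) (hY i) 2
      _ = _ := by simp
  refine h1.trans ?_
  calc A * ‖(WithLp.toLp 2 Y : Xn n)‖ ^ 2 ≤ (c * R ^ (2 - α)) * (n * (C * R⁻¹) ^ 2) :=
        mul_le_mul hAR h2 (by positivity) (hA.trans hAR)
    _ = c * (n * C ^ 2) * R ^ (-α) := by
        have : R ^ (2 - α) = R ^ 2 * R ^ (-α) := by
          rw [sub_eq_add_neg, Real.rpow_add hR, Real.rpow_two]
        rw [this]; field_simp

lemma integral_four {X : Type*} [MeasurableSpace X] {ν : Measure X} {f g h k : X → ℝ}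
    (hf : Integrable f ν) (hg : Integrable g ν) (hh : Integrable h ν) (hk : Integrable k ν)
    {b d : ℝ} : ∫ x, (f x - g x + (b * h x + d * k x)) ∂ν =
      (∫ x, f x ∂ν - ∫ x, g x ∂ν) + (b * ∫ x, h x ∂ν + d * ∫ x, k x ∂ν) := by
  have h1 : Integrable (fun x => f x - g x) ν := hf.sub hg
  have h2 : Integrable (fun x => b * h x) ν := hh.const_mul b
  have h3 : Integrable (fun x => d * k x) ν := hk.const_mul d
  have h4 : Integrable (fun x => b * h x + d * k x) ν := h2.add h3
  rw [integral_add h1 h4, integral_sub hf hg, integral_add h2 h3, integral_const_mul,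
    integral_const_mul]

set_option maxHeartbeats 4000000 in
lemma key_estimate
    (n : ℕ) (hn : 1 ≤ n) (α c q : ℝ) (hc : 0 < c)
    (hq1 : 1 < q) (hq2 : q ≤ 1 + α / n)
    (a : Fin n → Fin n → Pt n → ℝ) (A : Pt n → ℝ)
    (ha : ∀ i j, LB (a i j))
    (ha_symm : ∀ i j, ∀ᵐ p ∂(volume.restrict (halfSpace n)), a i j p = a j i p)
    (hA_nonneg : ∀ p, 0 ≤ A p)
    (hform : ∀ᵐ p ∂(volume.restrict (halfSpace n)), ∀ ξ : Xn n,
      0 ≤ ∑ i, ∑ j, a i j p * ξ i * ξ j ∧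
      ∑ i, ∑ j, a i j p * ξ i * ξ j ≤ A p * ‖ξ‖ ^ 2)
    (hcond8 : Cond8 A α c)
    (u : Pt n → ℝ)
    (hu : ContDiffOn ℝ 1 u (halfSpace n))
    (hsupersol : WeakSuperSol a q u)
    (hu_nonneg : ∀ p ∈ halfSpace n, 0 ≤ u p) :
    ∃ C : ℝ, 0 < C ∧ ∀ R : ℝ, 1 < R → ∃ Ψ : Pt n → ℝ, Continuous Ψ ∧
      (∀ p, 0 ≤ Ψ p ∧ Ψ p ≤ 1) ∧ (∀ p, p ∉ box n α R → Ψ p = 0) ∧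
      (∀ p : Pt n, 1 / R ≤ p.1 → p.1 ≤ R ^ α → ‖p.2‖ ≤ R / 2 → Ψ p = 1) ∧
      ∀ μ : ℝ, 0 < μ → ∫ p in halfSpace n, u p ^ q * Ψ p ≤
        C * (μ ^ (1 - q) * (∫ p in halfSpace n, (outer n α R).indicator (fun p => u p ^ q * Ψ p) p)
          + μ) := by
  obtain ⟨C1, hC1, hcut⟩ := exists_cutoff n α
  obtain ⟨C2, hC2, hvol⟩ := volume_box_le n α
  set δ : ℝ := min (1 / 2) ((q - 1) / 2) with hδdef
  have hδ : 0 < δ := lt_min (by norm_num) (by linarith)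
  have hδ2 : δ ≤ 1 / 2 := min_le_left _ _
  have hδq : 1 + δ < q := by
    have : δ ≤ (q - 1) / 2 := min_le_right _ _
    linarith
  have hq0 : 0 < q := by linarith
  obtain ⟨s0, hs0⟩ := exists_nat_ge (2 * q / (q - (1 + δ)))
  set s : ℕ := s0 + 3 with hsdef
  have hs3 : 3 ≤ s := by omega
  have hsq : (s : ℝ) * (1 + δ) / q ≤ s - 2 := by
    have : 2 * q / (q - (1 + δ)) ≤ s := hs0.trans (by rw [hsdef]; push_cast; linarith)
    rw [div_le_iff₀ (by linarith)] at this
    rw [div_le_iff₀ hq0]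
    linarith
  set C3 : ℝ := s * 3 * C1 + s ^ 2 / δ * (c * (n * C1 ^ 2)) with hC3
  have hC30 : 0 < C3 := by positivity
  refine ⟨4 * C3 * (1 + C2), by positivity, fun R hR => ?_⟩
  have hR0 : 0 < R := by linarith
  obtain ⟨ψ, ψ1, ψ2, ψ3, ψ4, ψ5, ψ6, ψ7, ψ8⟩ := hcut R hR
  have hψbox : ∀ p, p ∉ box n α R → ψ p = 0 := by
    intro p hp
    by_contra h
    obtain ⟨h1, h2, h3⟩ := ψ3 p h
    exact hp ⟨⟨h1, h2⟩, by simpa using h3⟩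
  have hts : tsupport ψ ⊆ box n α R := by
    refine closure_minimal (fun p hp => ?_) (isCompact_box n α R).isClosed
    by_contra h
    exact hp (hψbox p h)
  have htS : tsupport ψ ⊆ halfSpace n := hts.trans (box_subset n α hR)
  have hs_ne : s ≠ 0 := by omega
  refine ⟨fun p => ψ p ^ s, ψ1.continuous.pow s,
    fun p => ⟨pow_nonneg (ψ2 p).1 _, pow_le_one₀ (ψ2 p).1 (ψ2 p).2⟩,
    fun p hp => by simp [hψbox p hp, hs_ne], fun p h1 h2 h3 => by simp [ψ4 p h1 h2 h3],
    fun μ hμ => ?_⟩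
  set κ : ℝ := μ * R ^ (-(n : ℝ)) with hκdef
  have hκ : 0 < κ := mul_pos hμ (Real.rpow_pos_of_pos hR0 _)
  let G1 : ℝ → ℝ := fun y => 1 + (1 + y / κ) ^ (-δ)
  let G2 : ℝ → ℝ := fun y => y + κ * (1 + y / κ) ^ (1 - δ) / (1 - δ)
  have hW : ∀ y : ℝ, 0 ≤ y → 1 ≤ 1 + y / κ := fun y hy => by
    have : 0 ≤ y / κ := by positivity
    linarith
  have hlin : ∀ y, HasDerivAt (fun y : ℝ => 1 + y / κ) (1 / κ) y := fun y =>
    ((hasDerivAt_id y).div_const κ).const_add 1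
  have hG1 : ∀ y, 0 ≤ y → HasDerivAt G1 (-(δ * (1 + y / κ) ^ (-δ - 1) / κ)) y := by
    intro y hy
    have := ((hlin y).rpow_const (p := -δ) (Or.inl (by linarith [hW y hy]))).const_add 1
    refine HasDerivAt.congr_deriv this ?_
    ring
  have hG2 : ∀ y, 0 ≤ y → HasDerivAt G2 (G1 y) y := by
    intro y hy
    have := (hasDerivAt_id y).add ((((hlin y).rpow_const (p := 1 - δ)
      (Or.inl (by linarith [hW y hy]))).const_mul κ).div_const (1 - δ))
    refine HasDerivAt.congr_deriv this ?_
    have : 1 - δ ≠ 0 := by linarith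
    have e : 1 - δ - 1 = -δ := by ring
    simp only [G1, e]
    field_simp
  have hcd : ∀ (r : ℝ) (y : ℝ), 0 ≤ y → ContDiffAt ℝ 1 (fun y : ℝ => (1 + y / κ) ^ r) y := by
    intro r y hy
    exact ContDiffAt.rpow_const_of_ne (by fun_prop) (by linarith [hW y hy])
  have hG1c : ∀ p ∈ halfSpace n, ContDiffAt ℝ 1 G1 (u p) := fun p hp =>
    contDiffAt_const.add (hcd _ _ (hu_nonneg p hp))
  have hG2c : ∀ p ∈ halfSpace n, ContDiffAt ℝ 1 G2 (u p) := fun p hp =>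
    contDiffAt_id.add ((contDiffAt_const.mul (hcd _ _ (hu_nonneg p hp))).div_const _)
  -- test function
  let φ : Pt n → ℝ := fun p => ψ p ^ s * G1 (u p)
  let H : Pt n → ℝ := fun p => ψ p ^ s * G2 (u p)
  have hφ : ContDiff ℝ 1 φ := contDiff_pow_mul_comp hs_ne ψ1 htS hu hG1c
  have hH : ContDiff ℝ 1 H := contDiff_pow_mul_comp hs_ne ψ1 htS hu hG2c
  have hψcs : HasCompactSupport ψ :=
    (isCompact_box n α R).of_isClosed_subset (isClosed_tsupport _) hts
  have hφt : tsupport φ ⊆ tsupport ψ := tsupport_pow_mul_subset ψ _ hs_ne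
  have hHt : tsupport H ⊆ tsupport ψ := tsupport_pow_mul_subset ψ _ hs_ne
  have hφcs : HasCompactSupport φ := hψcs.of_isClosed_subset (isClosed_tsupport _) hφt
  have hHcs : HasCompactSupport H := hψcs.of_isClosed_subset (isClosed_tsupport _) hHt
  have hφ0 : ∀ p, 0 ≤ φ p := by
    intro p
    by_cases hp : p ∈ halfSpace n
    · have : 0 ≤ (1 + u p / κ) ^ (-δ) := Real.rpow_nonneg (by linarith [hW _ (hu_nonneg p hp)]) _
      exact mul_nonneg (pow_nonneg (ψ2 p).1 _) (by simp only [G1]; linarith)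
    · have : ψ p = 0 := image_eq_zero_of_notMem_tsupport fun h => hp (htS h)
      simp [φ, this, hs_ne]
  have hweak := weak_C1 hq1 ha hu hsupersol φ hφ hφcs (hφt.trans htS) hφ0
  have hzero := integral_pdT_eq_zero H hH hHcs (hHt.trans htS)
  have hRα : 0 < R ^ (-α) := Real.rpow_pos_of_pos hR0 _
  have huq : ContinuousOn (fun p => u p ^ q) (halfSpace n) :=
    hu.continuousOn.rpow_const fun _ _ => Or.inr hq0.le
  have hLuq : LB (fun p => u p ^ q * ψ p ^ s) :=
    LB.of_continuousOn (huq.mul (ψ1.continuous.pow s).continuousOn)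
  have hIint : IntegrableOn (fun p => u p ^ q * ψ p ^ s) (halfSpace n) :=
    hLuq.integrableOn (isCompact_box n α R) (box_subset n α hR)
      (fun p hp => by simp [hψbox p hp, hs_ne])
  have hJint : IntegrableOn ((outer n α R).indicator (fun p => u p ^ q * ψ p ^ s)) (halfSpace n) :=
    hIint.indicator (measurableSet_outer n α R)
  have hBint : IntegrableOn ((box n α R).indicator (fun _ => (1 : ℝ))) (halfSpace n) := by
    rw [IntegrableOn, integrable_indicator_iff (isCompact_box n α R).measurableSet]
    refine integrableOn_const ?_
    exact ((Measure.restrict_apply_le _ _).trans_lt (isCompact_box n α R).measure_lt_top).ne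
  have hHint : IntegrableOn (pdT H) (halfSpace n) := by
    refine (LB.of_continuousOn (continuousOn_pdT hH.contDiffOn)).integrableOn
      (isCompact_box n α R) (box_subset n α hR) fun p hp => ?_
    simp [pdT, fderiv_of_notMem_tsupport (𝕜 := ℝ) (fun h => hp (hts (hHt h)))]
  let rhs : Pt n → ℝ := fun p => (pdT H p - u p ^ q * ψ p ^ s) +
    (4 * C3 * (κ * R ^ (-α)) * (box n α R).indicator (fun _ => (1 : ℝ)) p +
    4 * C3 * (κ ^ (1 - q) * R ^ (-α)) *
      (outer n α R).indicator (fun p => u p ^ q * ψ p ^ s) p)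
  have hrhs_int : IntegrableOn rhs (halfSpace n) :=
    (hHint.sub hIint).add ((hBint.const_mul _).add (hJint.const_mul _))
  have hφu : ∀ p, p ∉ box n α R → φ p = 0 ∧ fderiv ℝ φ p = 0 ∧ fderiv ℝ H p = 0 := by
    intro p hp
    exact ⟨by simp [φ, hψbox p hp, hs_ne],
      fderiv_of_notMem_tsupport (𝕜 := ℝ) (fun h => hp (hts (hφt h))),
      fderiv_of_notMem_tsupport (𝕜 := ℝ) (fun h => hp (hts (hHt h)))⟩
  have hlhs_int : IntegrableOn (fun p => pdT u p * φ p +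
      ∑ i, ∑ j, a i j p * pdX φ i p * pdX u j p - oddPow q (u p) * φ p) (halfSpace n) := by
    have hLφ : LB φ := LB.of_continuousOn hφ.continuous.continuousOn
    refine (((LB.of_continuousOn (continuousOn_pdT hu)).mul hLφ).add (LB.sum _ fun i =>
      LB.sum _ fun j => ((ha i j).mul (LB.of_continuousOn (continuousOn_pdX hφ.contDiffOn i))).mul
        (LB.of_continuousOn (continuousOn_pdX hu j)))).sub ((LB.of_continuousOn
          ((continuous_oddPow hq1).comp_continuousOn hu.continuousOn)).mul hLφ) |>.integrableOn
      (isCompact_box n α R) (box_subset n α hR) fun p hp => ?_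
    obtain ⟨e1, e2, -⟩ := hφu p hp
    simp [e1, pdX, e2]
  have hpt : ∀ᵐ p ∂(volume.restrict (halfSpace n)), pdT u p * φ p +
      ∑ i, ∑ j, a i j p * pdX φ i p * pdX u j p - oddPow q (u p) * φ p ≤ rhs p := by
    have h8 : ∀ᵐ p ∂(volume.restrict (halfSpace n)),
        (R / 2 < ‖p.2‖ ∧ ‖p.2‖ < R) → A p ≤ c * R ^ (2 - α) := by
      have hset : MeasurableSet {p : Pt n | 0 < p.1 ∧ R / 2 < ‖p.2‖ ∧ ‖p.2‖ < R} := by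
        refine IsOpen.measurableSet ?_
        exact (isOpen_lt continuous_const continuous_fst).inter
          ((isOpen_lt continuous_const continuous_snd.norm).inter
            (isOpen_lt continuous_snd.norm continuous_const))
      have := (ae_restrict_iff' hset).1 (hcond8 R hR)
      rw [ae_restrict_iff' (measurableSet_halfSpace n)]
      filter_upwards [this] with p hp h1 h2
      exact hp ⟨h1, h2⟩
    have hsym : ∀ᵐ p ∂(volume.restrict (halfSpace n)), ∀ i j, a i j p = a j i p :=
      ae_all_iff.2 fun i => ae_all_iff.2 fun j => ha_symm i j
    filter_upwards [h8, hsym, hform, ae_restrict_mem (measurableSet_halfSpace n)]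
      with p p8 psym pform pS
    by_cases hpb : p ∈ box n α R
    swap
    · obtain ⟨e1, e2, e3⟩ := hφu p hpb
      simp [rhs, e1, pdX, pdT, e2, e3, hpb, indicator, hψbox p hpb, hs_ne]
    have hup := hu_nonneg p pS
    have hud : DifferentiableAt ℝ u p :=
      (hu.contDiffAt ((isOpen_halfSpace n).mem_nhds pS)).differentiableAt one_ne_zero
    have hψd : DifferentiableAt ℝ ψ p := ψ1.differentiable (by simp) p
    set w := u p / κ with hw
    have hw0 : 0 ≤ w := by positivity
    have hW1 : 1 ≤ 1 + w := by linarith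
    set X := ∑ i, ∑ j, a i j p * pdX u i p * pdX u j p with hX
    set Z := ∑ i, ∑ j, a i j p * pdX ψ i p * pdX u j p with hZ
    set Y := ∑ i, ∑ j, a i j p * pdX ψ i p * pdX ψ j p with hY
    have hQ : ∀ b d : ℝ, 0 ≤ b ^ 2 * X - 2 * b * d * Z + d ^ 2 * Y := by
      intro b d
      rw [hX, hY, hZ, ← quad_expand (fun i j => a i j p) psym (fun i => pdX u i p)
        (fun i => pdX ψ i p) b d]
      exact (pform (WithLp.toLp 2 fun i => b * pdX u i p - d * pdX ψ i p)).1
    have hcs := scalar_cs (s := s) hW1 (ψ2 p).1 hδ hκ (by omega) hQ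
    have hsum : ∑ i, ∑ j, a i j p * pdX φ i p * pdX u j p =
        s * ψ p ^ (s - 1) * (1 + (1 + w) ^ (-δ)) * Z
          - ψ p ^ s * (δ * (1 + w) ^ (-δ - 1) / κ) * X := by
      have hφi : ∀ i, pdX φ i p = s * ψ p ^ (s - 1) * (1 + (1 + w) ^ (-δ)) * pdX ψ i p +
          ψ p ^ s * (-(δ * (1 + w) ^ (-δ - 1) / κ)) * pdX u i p := fun i =>
        fderiv_pow_mul_comp s hψd hud (hG1 _ hup) _
      rw [hX, hZ]
      simp only [Finset.mul_sum, ← Finset.sum_sub_distrib]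
      refine Finset.sum_congr rfl fun i _ => Finset.sum_congr rfl fun j _ => ?_
      rw [hφi]; ring
    have hTH : pdT H p = s * ψ p ^ (s - 1) * G2 (u p) * pdT ψ p + ψ p ^ s * G1 (u p) * pdT u p :=
      fderiv_pow_mul_comp s hψd hud (hG2 _ hup) _
    have hWδ : 0 ≤ (1 + w) ^ (-δ) := Real.rpow_nonneg (by linarith) _
    have hodd : u p ^ q * ψ p ^ s ≤ oddPow q (u p) * φ p := by
      rw [oddPow_of_nonneg hq1 hup]
      refine mul_le_mul_of_nonneg_left ?_ (Real.rpow_nonneg hup _)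
      have := mul_nonneg (pow_nonneg (ψ2 p).1 s) hWδ
      have e : φ p = ψ p ^ s * (1 + (1 + w) ^ (-δ)) := rfl
      rw [e]; linarith
    have hG20 : 0 ≤ G2 (u p) := by
      have : 0 ≤ (1 + w) ^ (1 - δ) := Real.rpow_nonneg (by linarith) _
      have h1 : 0 < 1 - δ := by linarith
      have e : G2 (u p) = u p + κ * (1 + w) ^ (1 - δ) / (1 - δ) := rfl
      rw [e]; positivity
    have hWW : 1 + w ≤ (1 + w) ^ (1 + δ) := by
      conv_lhs => rw [← Real.rpow_one (1 + w)]
      exact Real.rpow_le_rpow_of_exponent_le hW1 (by linarith)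
    have hG2u : G2 (u p) ≤ 3 * κ * (1 + w) ^ (1 + δ) := by
      have h2 : (1 + w) ^ (1 - δ) ≤ 1 + w := by
        conv_rhs => rw [← Real.rpow_one (1 + w)]
        exact Real.rpow_le_rpow_of_exponent_le hW1 (by linarith)
      have h1 : 0 < 1 - δ := by linarith
      have e : G2 (u p) = u p + κ * (1 + w) ^ (1 - δ) / (1 - δ) := rfl
      have h3 : κ * (1 + w) ^ (1 - δ) / (1 - δ) ≤ 2 * (κ * (1 + w)) := by
        rw [div_le_iff₀ h1]
        have h4 : κ * (1 + w) ^ (1 - δ) ≤ κ * (1 + w) := by gcongr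
        have h5 : 0 ≤ κ * (1 + w) * (1 - 2 * δ) := mul_nonneg (by positivity) (by linarith)
        nlinarith
      have h6 : u p ≤ κ * (1 + w) := by
        rw [hw]; field_simp; linarith
      rw [e]
      have := mul_le_mul_of_nonneg_left hWW hκ.le
      linarith
    have hψm : ψ p ^ (s - 1) ≤ ψ p ^ (s - 2) :=
      pow_le_pow_of_le_one (ψ2 p).1 (ψ2 p).2 (by omega)
    have hψm0 : 0 ≤ ψ p ^ (s - 2) := pow_nonneg (ψ2 p).1 _
    have hψm1 : 0 ≤ ψ p ^ (s - 1) := pow_nonneg (ψ2 p).1 _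
    have hWd0 : 0 ≤ (1 + w) ^ (1 + δ) := Real.rpow_nonneg (by linarith) _
    have hφp : φ p = ψ p ^ s * G1 (u p) := rfl
    have hb1 : (box n α R).indicator (fun _ => (1 : ℝ)) p = 1 := by simp [hpb]
    have hmain : pdT u p * φ p +
        ∑ i, ∑ j, a i j p * pdX φ i p * pdX u j p - oddPow q (u p) * φ p ≤
        pdT H p - u p ^ q * ψ p ^ s + (s * (ψ p ^ (s - 1) * G2 (u p)) * (- pdT ψ p) +
          s ^ 2 / δ * κ * (1 + w) ^ (1 + δ) * ψ p ^ (s - 2) * Y) := by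
      rw [hsum, hTH, hφp] at *
      linarith
    refine hmain.trans ?_
    simp only [rhs, hb1, mul_one]
    refine add_le_add_right ?_ _
    by_cases hpo : p ∈ outer n α R
    · rw [indicator_of_mem hpo]
      have hYle : Y ≤ c * (n * C1 ^ 2) * R ^ (-α) := by
        by_cases hann : R / 2 < ‖p.2‖ ∧ ‖p.2‖ < R
        · exact quad_le (fun i j => a i j p) (A p) c α R C1 hR0 (hA_nonneg p) _
            (fun i => ψ7 i p) (p8 hann) fun ξ => (pform ξ).2
        · have : Y = 0 := by simp [hY, fun i => ψ8 i p hann]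
          rw [this]; positivity
      have hyoung := scalar_young (s := s) hw0 (ψ2 p).1 (ψ2 p).2 hδ (by linarith) hδq.le hs3 hsq
      have t1 : s * (ψ p ^ (s - 1) * G2 (u p)) * (- pdT ψ p) ≤
          s * (ψ p ^ (s - 2) * (3 * κ * (1 + w) ^ (1 + δ))) * (C1 * R ^ (-α)) := by
        have k1 : ψ p ^ (s - 1) * G2 (u p) ≤ ψ p ^ (s - 2) * (3 * κ * (1 + w) ^ (1 + δ)) :=
          mul_le_mul hψm hG2u hG20 hψm0
        calc _ ≤ s * (ψ p ^ (s - 1) * G2 (u p)) * (C1 * R ^ (-α)) :=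
              mul_le_mul_of_nonneg_left (ψ5 p) (by positivity)
          _ ≤ _ := by gcongr
      have t2 : s ^ 2 / δ * κ * (1 + w) ^ (1 + δ) * ψ p ^ (s - 2) * Y ≤
          s ^ 2 / δ * κ * (1 + w) ^ (1 + δ) * ψ p ^ (s - 2) * (c * (n * C1 ^ 2) * R ^ (-α)) := by
        gcongr
      have t3 := mul_le_mul_of_nonneg_left hyoung
        (by positivity : 0 ≤ C3 * (κ * R ^ (-α)))
      have t4 : κ * w ^ q = κ ^ (1 - q) * u p ^ q := by
        rw [hw, Real.div_rpow hup hκ.le, Real.rpow_sub hκ, Real.rpow_one]; ring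
      calc _ ≤ _ := add_le_add t1 t2
        _ = C3 * (κ * R ^ (-α)) * ((1 + w) ^ (1 + δ) * ψ p ^ (s - 2)) := by rw [hC3]; ring
        _ ≤ _ := t3
        _ = 4 * C3 * (κ * R ^ (-α)) + 4 * C3 * ((κ * w ^ q) * R ^ (-α)) * ψ p ^ s := by ring
        _ = _ := by rw [t4]; ring
    · rw [indicator_of_notMem hpo]
      simp only [outer, mem_setOf_eq, not_or, not_le] at hpo
      have hY0 : Y = 0 := by
        have hann : ¬ (R / 2 < ‖p.2‖ ∧ ‖p.2‖ < R) := fun h => by linarith [h.1, hpo.2]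
        simp [hY, fun i => ψ8 i p hann]
      rw [hY0]
      have k1 := ψ6 p hpo.1
      have k2 : 0 ≤ s * (ψ p ^ (s - 1) * G2 (u p)) * pdT ψ p := by positivity
      have k3 : 0 ≤ 4 * C3 * (κ * R ^ (-α)) := by positivity
      linarith
  have hmono := integral_mono_ae hlhs_int hrhs_int hpt
  have hrhs : ∫ p in halfSpace n, rhs p = (0 - ∫ p in halfSpace n, u p ^ q * ψ p ^ s) +
      (4 * C3 * (κ * R ^ (-α)) * volume.real (box n α R) +
        4 * C3 * (κ ^ (1 - q) * R ^ (-α)) *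
        ∫ p in halfSpace n, (outer n α R).indicator (fun p => u p ^ q * ψ p ^ s) p) := by
    have e1 : ∫ p in halfSpace n, (box n α R).indicator (fun _ => (1 : ℝ)) p =
        volume.real (box n α R) := by
      rw [integral_indicator (isCompact_box n α R).measurableSet,
        Measure.restrict_restrict (isCompact_box n α R).measurableSet,
        inter_eq_left.2 (box_subset n α hR)]
      simp
    simp only [rhs]
    rw [integral_four hHint hIint hBint hJint, hzero, e1]
  rw [hrhs] at hmono
  set I := ∫ p in halfSpace n, u p ^ q * ψ p ^ s
  set J := ∫ p in halfSpace n, (outer n α R).indicator (fun p => u p ^ q * ψ p ^ s) p with hJ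
  have hJ0 : 0 ≤ J := by
    refine setIntegral_nonneg (measurableSet_halfSpace n) fun p hp => ?_
    refine indicator_apply_nonneg fun _ => ?_
    exact mul_nonneg (Real.rpow_nonneg (hu_nonneg p hp) _) (pow_nonneg (ψ2 p).1 _)
  have f1 : κ * R ^ (-α) * volume.real (box n α R) ≤ C2 * μ := by
    calc κ * R ^ (-α) * volume.real (box n α R) ≤ κ * R ^ (-α) * (C2 * (R ^ α * R ^ (n : ℝ))) := by
          gcongr; exact hvol R hR
      _ = C2 * μ * ((R ^ (-(n : ℝ)) * R ^ (n : ℝ)) * (R ^ (-α) * R ^ α)) := by rw [hκdef]; ring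
      _ = C2 * μ := by
          rw [← Real.rpow_add hR0, ← Real.rpow_add hR0]; simp
  have f2 : κ ^ (1 - q) * R ^ (-α) ≤ μ ^ (1 - q) := by
    have hn0 : (0 : ℝ) < n := by exact_mod_cast hn
    have hnq : n * (q - 1) ≤ α := by
      have : q - 1 ≤ α / n := by linarith
      rw [le_div_iff₀ hn0] at this; linarith
    rw [hκdef, Real.mul_rpow hμ.le (Real.rpow_nonneg hR0.le _), ← Real.rpow_mul hR0.le, mul_assoc,
      ← Real.rpow_add hR0]
    have : R ^ (-(n : ℝ) * (1 - q) + -α) ≤ 1 :=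
      Real.rpow_le_one_of_one_le_of_nonpos hR.le (by linarith)
    exact mul_le_of_le_one_right (Real.rpow_nonneg hμ.le _) this
  have f3 := mul_le_mul_of_nonneg_right f2 hJ0
  have f4 := mul_le_mul_of_nonneg_left (add_le_add f1 f3) (by positivity : 0 ≤ 4 * C3)
  have hμq : 0 ≤ μ ^ (1 - q) := Real.rpow_nonneg hμ.le _
  have f5 : C2 * μ + μ ^ (1 - q) * J ≤ (1 + C2) * (μ ^ (1 - q) * J + μ) := by
    have : 0 ≤ C2 * (μ ^ (1 - q) * J) := by positivity
    nlinarith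
  have f6 := mul_le_mul_of_nonneg_left f5 (by positivity : 0 ≤ 4 * C3)
  linarith

/-- Sets on which the cutoff is one. -/
def core (n : ℕ) (α R : ℝ) : Set (Pt n) :=
  Icc (1 / R) (R ^ α) ×ˢ closedBall (0 : Xn n) (R / 2)

lemma isCompact_core (n : ℕ) (α R : ℝ) : IsCompact (core n α R) :=
  isCompact_Icc.prod (isCompact_closedBall _ _)

lemma core_subset (n : ℕ) (α : ℝ) {R : ℝ} (hR : 1 < R) : core n α R ⊆ halfSpace n := by
  intro p hp
  have h1 : 1 / R ≤ p.1 := hp.1.1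
  have : 0 < 1 / R := by positivity
  exact this.trans_le h1

lemma tendsto_radius : Tendsto (fun k : ℕ => (k : ℝ) + 2) atTop atTop :=
  tendsto_atTop_add_const_right _ _ tendsto_natCast_atTop_atTop

lemma aecover_core (n : ℕ) (α : ℝ) (hα : 0 < α) :
    AECover (volume.restrict (halfSpace n)) atTop
      (fun k : ℕ => core n α ((k : ℝ) + 2)) := by
  refine ⟨?_, fun k => (isCompact_core n α _).measurableSet⟩
  refine (ae_restrict_mem (measurableSet_halfSpace n)).mono fun p hp => ?_
  have hp0 : 0 < p.1 := hp
  have h1 : ∀ᶠ k : ℕ in atTop, 1 / p.1 ≤ (k : ℝ) + 2 := tendsto_radius.eventually_ge_atTop _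
  have h2 : ∀ᶠ k : ℕ in atTop, p.1 ≤ ((k : ℝ) + 2) ^ α :=
    ((tendsto_rpow_atTop hα).comp tendsto_radius).eventually_ge_atTop _
  have h3 : ∀ᶠ k : ℕ in atTop, 2 * ‖p.2‖ ≤ (k : ℝ) + 2 := tendsto_radius.eventually_ge_atTop _
  filter_upwards [h1, h2, h3] with k h1 h2 h3
  refine ⟨⟨?_, h2⟩, ?_⟩
  · have hk : (0 : ℝ) < (k : ℝ) + 2 := by positivity
    rw [div_le_iff₀ hp0] at h1
    rw [div_le_iff₀ hk]; linarith
  · rw [mem_closedBall, dist_zero_right]; linarith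

lemma eventually_notMem_outer (n : ℕ) (α : ℝ) (hα : 0 < α) (p : Pt n) :
    ∀ᶠ k : ℕ in atTop, p ∉ outer n α ((k : ℝ) + 2) := by
  have h2 : ∀ᶠ k : ℕ in atTop, p.1 < ((k : ℝ) + 2) ^ α :=
    ((tendsto_rpow_atTop hα).comp tendsto_radius).eventually_gt_atTop _
  have h3 : ∀ᶠ k : ℕ in atTop, 2 * ‖p.2‖ < (k : ℝ) + 2 := tendsto_radius.eventually_gt_atTop _
  filter_upwards [h2, h3] with k h2 h3 h
  rcases h with h | h <;> linarith

lemma liouville_final (n : ℕ) (α q C : ℝ) (hα : 0 < α) (hq1 : 1 < q) (hC : 0 < C)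
    (u : Pt n → ℝ) (hu : ContinuousOn u (halfSpace n)) (hu_nonneg : ∀ p ∈ halfSpace n, 0 ≤ u p)
    (hkey : ∀ R : ℝ, 1 < R → ∃ Ψ : Pt n → ℝ, Continuous Ψ ∧
      (∀ p, 0 ≤ Ψ p ∧ Ψ p ≤ 1) ∧ (∀ p, p ∉ box n α R → Ψ p = 0) ∧
      (∀ p : Pt n, 1 / R ≤ p.1 → p.1 ≤ R ^ α → ‖p.2‖ ≤ R / 2 → Ψ p = 1) ∧
      ∀ μ : ℝ, 0 < μ → ∫ p in halfSpace n, u p ^ q * Ψ p ≤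
        C * (μ ^ (1 - q) * (∫ p in halfSpace n, (outer n α R).indicator (fun p => u p ^ q * Ψ p) p)
          + μ)) :
    ∀ p ∈ halfSpace n, u p = 0 := by
  have hq0 : 0 < q := by linarith
  have hRk : ∀ k : ℕ, (1 : ℝ) < (k : ℝ) + 2 := fun k => by
    have : (0 : ℝ) ≤ k := Nat.cast_nonneg k
    linarith
  have hS := measurableSet_halfSpace n
  have hg : ContinuousOn (fun p => u p ^ q) (halfSpace n) := hu.rpow_const fun _ _ => Or.inr hq0.le
  have hg0 : ∀ p ∈ halfSpace n, 0 ≤ u p ^ q := fun p hp => Real.rpow_nonneg (hu_nonneg p hp) _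
  have hg0ae : ∀ᵐ p ∂(volume.restrict (halfSpace n)), 0 ≤ u p ^ q :=
    (ae_restrict_mem hS).mono hg0
  choose! Ψ hΨc hΨ01 hΨ0 hΨ1 hΨ using hkey
  have hIntg : ∀ R, 1 < R → Integrable (fun p => u p ^ q * Ψ R p) (volume.restrict (halfSpace n)) := by
    intro R hR
    refine LB.integrableOn (LB.of_continuousOn (hg.mul (hΨc R hR).continuousOn))
      (isCompact_box n α R) (box_subset n α hR) fun p hp => ?_
    simp [hΨ0 R hR p hp]
  have hcoreint : ∀ k : ℕ, IntegrableOn (fun p => u p ^ q) (core n α ((k : ℝ) + 2))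
      (volume.restrict (halfSpace n)) := by
    intro k
    have h1 : IntegrableOn (fun p => u p ^ q) (core n α ((k : ℝ) + 2)) volume :=
      (hg.mono (core_subset n α (hRk k))).integrableOn_compact (isCompact_core n α _)
    exact h1.mono_measure Measure.restrict_le_self
  have hcore : ∀ k : ℕ, ∫ p in core n α ((k : ℝ) + 2), u p ^ q ∂(volume.restrict (halfSpace n)) ≤
      ∫ p in halfSpace n, u p ^ q * Ψ ((k : ℝ) + 2) p := by
    intro k
    have hm := (isCompact_core n α ((k : ℝ) + 2)).measurableSet
    rw [← integral_indicator hm]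
    refine integral_mono_ae ((integrable_indicator_iff hm).2 (hcoreint k)) (hIntg _ (hRk k)) ?_
    filter_upwards [hg0ae] with p hp
    by_cases hpc : p ∈ core n α ((k : ℝ) + 2)
    · rw [indicator_of_mem hpc, hΨ1 _ (hRk k) p hpc.1.1 hpc.1.2
        (by simpa [mem_closedBall, dist_zero_right] using hpc.2), mul_one]
    · rw [indicator_of_notMem hpc]
      exact mul_nonneg hp (hΨ01 _ (hRk k) p).1
  -- Step 1: uniform bound
  have hlim : Tendsto (fun μ : ℝ => C * μ ^ (1 - q)) atTop (𝓝 (C * 0)) := by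
    have := tendsto_rpow_neg_atTop (show 0 < q - 1 by linarith)
    simp only [neg_sub] at this
    exact this.const_mul C
  rw [mul_zero] at hlim
  obtain ⟨μ0, hμ1, hμ0⟩ := ((hlim.eventually_le_const (show (0 : ℝ) < 1 / 2 by norm_num)).and
    (eventually_gt_atTop 0)).exists
  have hbound : ∀ R, 1 < R → ∫ p in halfSpace n, u p ^ q * Ψ R p ≤ 2 * C * μ0 := by
    intro R hR
    have h1 := hΨ R hR μ0 hμ0
    have h2 : ∫ p in halfSpace n, (outer n α R).indicator (fun p => u p ^ q * Ψ R p) p ≤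
        ∫ p in halfSpace n, u p ^ q * Ψ R p := by
      refine integral_mono_ae ((hIntg R hR).indicator (measurableSet_outer n α R)) (hIntg R hR) ?_
      filter_upwards [hg0ae] with p hp
      exact indicator_apply_le' (fun _ => le_rfl) fun _ => mul_nonneg hp (hΨ01 R hR p).1
    have h3 : 0 ≤ ∫ p in halfSpace n, (outer n α R).indicator (fun p => u p ^ q * Ψ R p) p := by
      refine integral_nonneg_of_ae ?_
      filter_upwards [hg0ae] with p hp
      exact indicator_apply_nonneg fun _ => mul_nonneg hp (hΨ01 R hR p).1
    have h4 := mul_le_mul_of_nonneg_right hμ1 h3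
    nlinarith
  have hgint : Integrable (fun p => u p ^ q) (volume.restrict (halfSpace n)) :=
    (aecover_core n α hα).integrable_of_integral_bounded_of_nonneg_ae (2 * C * μ0) hcoreint hg0ae
      (Eventually.of_forall fun k => (hcore k).trans (hbound _ (hRk k)))
  -- Step 2: the outer integrals vanish in the limit
  have hout : Tendsto (fun k : ℕ => ∫ p in halfSpace n,
      (outer n α ((k : ℝ) + 2)).indicator (fun p => u p ^ q) p) atTop (𝓝 0) := by
    have := tendsto_integral_of_dominated_convergence
      (μ := volume.restrict (halfSpace n))
      (F := fun (k : ℕ) p => (outer n α ((k : ℝ) + 2)).indicator (fun p => u p ^ q) p)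
      (f := fun _ => (0 : ℝ)) (fun p => ‖u p ^ q‖)
      (fun k => hgint.aestronglyMeasurable.indicator (measurableSet_outer n α _)) hgint.norm
      (fun k => ae_of_all _ fun p => norm_indicator_le_norm_self _ _)
      (ae_of_all _ fun p => by
        refine tendsto_const_nhds.congr' ?_
        filter_upwards [eventually_notMem_outer n α hα p] with k hk
        rw [indicator_of_notMem hk])
    simpa using this
  have hcov := (aecover_core n α hα).integral_tendsto_of_countably_generated hgint
  have hle : ∀ μ : ℝ, 0 < μ → ∫ p in halfSpace n, u p ^ q ≤ C * μ := by
    intro μ hμ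
    have hR : Tendsto (fun k : ℕ => C * (μ ^ (1 - q) * (∫ p in halfSpace n,
        (outer n α ((k : ℝ) + 2)).indicator (fun p => u p ^ q) p) + μ)) atTop
        (𝓝 (C * (μ ^ (1 - q) * 0 + μ))) :=
      ((hout.const_mul _).add_const _).const_mul _
    have h := le_of_tendsto_of_tendsto' hcov hR fun k => by
      refine ((hcore k).trans (hΨ _ (hRk k) μ hμ)).trans ?_
      have hμq : 0 ≤ μ ^ (1 - q) := Real.rpow_nonneg hμ.le _
      refine mul_le_mul_of_nonneg_left (add_le_add_left
        (mul_le_mul_of_nonneg_left ?_ hμq) _) hC.le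
      refine integral_mono_ae ((hIntg _ (hRk k)).indicator (measurableSet_outer n α _))
        (hgint.indicator (measurableSet_outer n α _)) ?_
      filter_upwards [hg0ae] with p hp
      refine indicator_le_indicator ?_
      exact mul_le_of_le_one_right hp (hΨ01 _ (hRk k) p).2
    simpa using h
  have hzero : ∫ p in halfSpace n, u p ^ q = 0 := by
    refine le_antisymm ?_ (integral_nonneg_of_ae hg0ae)
    refine le_of_forall_pos_le_add fun ε hε => ?_
    have := hle (ε / C) (by positivity)
    rw [mul_div_cancel₀ _ hC.ne'] at this
    linarith
  have hae := (integral_eq_zero_iff_of_nonneg_ae hg0ae hgint).1 hzero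
  have heq := Measure.eqOn_open_of_ae_eq hae (isOpen_halfSpace n) hg continuousOn_const
  intro p hp
  have h := heq hp
  exact (Real.rpow_eq_zero (hu_nonneg p hp) hq0.ne').1 h


end Helpers

/-- the Liouville-type theorem for non-negative weak
super-solutions (Theorem 3). -/
theorem liouville_nonneg_supersol
    (n : ℕ) (hn : 1 ≤ n) (α c q : ℝ) (hα : 0 < α) (hc : 0 < c)
    (hq1 : 1 < q) (hq2 : q ≤ 1 + α / n)
    (a : Fin n → Fin n → Pt n → ℝ) (A : Pt n → ℝ)
    (ha_meas : ∀ i j, Measurable (a i j))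
    (ha_locbdd : ∀ i j, ∀ K : Set (Pt n), IsCompact K → K ⊆ halfSpace n →
      ∃ M, ∀ p ∈ K, |a i j p| ≤ M)
    (ha_symm : ∀ i j, ∀ᵐ p ∂(volume.restrict (halfSpace n)), a i j p = a j i p)
    (hA_meas : Measurable A)
    (hA_nonneg : ∀ p, 0 ≤ A p)
    (hA_locbdd : ∀ K : Set (Pt n), IsCompact K → K ⊆ halfSpace n →
      ∃ M, ∀ p ∈ K, A p ≤ M)
    (hform : ∀ᵐ p ∂(volume.restrict (halfSpace n)), ∀ ξ : Xn n,
      0 ≤ ∑ i, ∑ j, a i j p * ξ i * ξ j ∧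
      ∑ i, ∑ j, a i j p * ξ i * ξ j ≤ A p * ‖ξ‖ ^ 2)
    (hcond8 : Cond8 A α c)
    (u : Pt n → ℝ)
    (hu : ContDiffOn ℝ 1 u (halfSpace n))
    (hu_int : LocallyIntegrableOn (fun p => |u p| ^ q) (halfSpace n) volume)
    (hsupersol : WeakSuperSol a q u)
    (hu_nonneg : ∀ p ∈ halfSpace n, 0 ≤ u p) :
    ∀ p ∈ halfSpace n, u p = 0 := by
  have ha : ∀ i j, LB (a i j) := fun i j =>
    ⟨(ha_meas i j).aestronglyMeasurable, ha_locbdd i j⟩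
  obtain ⟨C, hC, hkey⟩ := key_estimate n hn α c q hc hq1 hq2 a A ha ha_symm hA_nonneg hform
    hcond8 u hu hsupersol hu_nonneg
  exact liouville_final n α q C hα hq1 hC u hu.continuousOn hu_nonneg hkey
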